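/- Achievability part of Lemma 1: let a ≥ 1, let A ≥ h ≥ 1 be integers, and write A = qh + r with 0 ≤ r < h (Euclidean division). Define v : ℤ → ℕ by v_i = q+1 if 0 ≤ i < r, v_i = q if r ≤ i < h, and v_i = 0 otherwise. Then v has support of cardinality exactly h, Σ_{i∈ℤ} v_i = A, and Σ_{i∈ℤ} (φ_a(v))_i = A + (a−1)·⌈A/h⌉, where (φ_a(v))_i = max_{k ∈ {i, i−1, …, i−a+1}} v_k. -/

import Mathlib

/-!
If `u : ℤ → ℕ` vanishes on the negative integers and is antitone on the nonnegative ones, then the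
maximum of `u` over a window is attained at the leftmost nonnegative point of the window. Hence
`φ_a(u)` is the translate of `u` by `a - 1`, preceded by a plateau of height `u 0` on the `a - 1`
points `[0, a - 1)`, and its sum exceeds that of `u` by `(a - 1) * u 0`. The function `v` of the
theorem is of this kind, and `v 0 = ⌈A / h⌉`.
-/

lemma finsum_indicator_const {ι M : Type*} [AddCommMonoid M] (s : Finset ι) (c : M) :
    ∑ᶠ i, (s : Set ι).indicator (fun _ ↦ c) i = s.card • c := by
  rw [← finsum_mem_def, finsum_mem_coe_finset, Finset.sum_const]

lemma finite_support_indicator {ι M : Type*} [Zero M] (s : Finset ι) (f : ι → M) :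
    ((s : Set ι).indicator f).support.Finite :=
  s.finite_toSet.subset Set.support_indicator_subset

section SlidingMax

variable {M : Type*} [SemilatticeSup M] [OrderBot M]

/-- The sliding-window maximum `φ_a(u)`: its value at `i` is the maximum of `u` over the window
`{i - a + 1, …, i}`, which is empty, with maximum `⊥`, when `a ≤ 0`. -/
noncomputable def slidingMax (a : ℤ) (u : ℤ → M) (i : ℤ) : M :=
  (Finset.Icc (i - a + 1) i).sup u

lemma sup_Icc_eq_apply_max_zero {u : ℤ → M} (hneg : ∀ k < 0, u k = ⊥)
    (hanti : AntitoneOn u (Set.Ici 0)) {i j : ℤ} (hij : i ≤ j) (hj : 0 ≤ j) :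
    (Finset.Icc i j).sup u = u (max i 0) := by
  refine sup_eq_of_isMaxOn (Finset.mem_Icc.2 ⟨le_max_left i 0, max_le hij hj⟩) ?_
  intro k hk
  obtain hk0 | hk0 := lt_or_ge k 0
  · exact (hneg k hk0).trans_le bot_le
  · exact hanti (le_max_right i 0) hk0 (max_le (Finset.mem_Icc.1 hk).1 hk0)

variable [AddCommMonoid M] [CanonicallyOrderedAdd M]

lemma slidingMax_eq_indicator_add {u : ℤ → M} (hneg : ∀ k < 0, u k = 0)
    (hanti : AntitoneOn u (Set.Ici 0)) {a : ℤ} (ha : 1 ≤ a) (i : ℤ) :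
    slidingMax a u i = (Set.Ico 0 (a - 1)).indicator (fun _ ↦ u 0) i + u (i - (a - 1)) := by
  have hbot : ∀ k < 0, u k = ⊥ := fun k hk ↦ (hneg k hk).trans bot_eq_zero.symm
  obtain hi | hi := lt_or_ge i 0
  · have hwindow : slidingMax a u i = ⊥ :=
      (Finset.sup_eq_bot_iff _ _).2 fun k hk ↦ hbot k ((Finset.mem_Icc.1 hk).2.trans_lt hi)
    rw [hwindow, Set.indicator_of_notMem (fun h ↦ hi.not_ge h.1),
      hneg (i - (a - 1)) (by lia), add_zero, bot_eq_zero]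
  have hwindow : slidingMax a u i = u (max (i - a + 1) 0) :=
    sup_Icc_eq_apply_max_zero hbot hanti (by lia) hi
  obtain hia | hia := lt_or_ge i (a - 1)
  · rw [hwindow, max_eq_right (by lia), Set.indicator_of_mem (Set.mem_Ico.2 ⟨hi, hia⟩),
      hneg (i - (a - 1)) (by lia), add_zero]
  · rw [hwindow, max_eq_left (by lia), Set.indicator_of_notMem (fun h ↦ hia.not_gt h.2), zero_add,
      sub_sub_eq_add_sub, add_sub_right_comm]

theorem finsum_slidingMax_of_antitoneOn {u : ℤ → M} (hfin : u.support.Finite)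
    (hneg : ∀ k < 0, u k = 0) (hanti : AntitoneOn u (Set.Ici 0)) {a : ℤ} (ha : 1 ≤ a) :
    ∑ᶠ i, slidingMax a u i = (a - 1).toNat • u 0 + ∑ᶠ i, u i := by
  have hshift : (fun i ↦ u (i - (a - 1))).support.Finite :=
    hfin.preimage sub_left_injective.injOn
  calc ∑ᶠ i, slidingMax a u i
      = ∑ᶠ i, ((Finset.Ico 0 (a - 1) : Set ℤ).indicator (fun _ ↦ u 0) i + u (i - (a - 1))) :=
        finsum_congr fun i ↦ by
          rw [Finset.coe_Ico, slidingMax_eq_indicator_add hneg hanti ha]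
    _ = (a - 1).toNat • u 0 + ∑ᶠ i, u (i - (a - 1)) := by
        rw [finsum_add_distrib (finite_support_indicator _ _) hshift, finsum_indicator_const,
          Int.card_Ico, sub_zero]
    _ = (a - 1).toNat • u 0 + ∑ᶠ i, u i :=
        congrArg _ (finsum_comp_equiv (Equiv.subRight (a - 1)))

end SlidingMax

/-- The function `v` of the theorem, for arbitrary parameters: height `q + 1` on `[0, r)`, height
`q` on `[r, h)`, and `0` elsewhere. For `r ≤ h` it spreads `q * h + r` as evenly as possible over
`[0, h)`. -/
def twoStep (q r h : ℕ) (i : ℤ) : ℕ :=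
  if 0 ≤ i ∧ i < (r : ℤ) then q + 1 else if (r : ℤ) ≤ i ∧ i < (h : ℤ) then q else 0

namespace twoStep

variable {q r h : ℕ}

lemma apply_of_neg {i : ℤ} (hi : i < 0) : twoStep q r h i = 0 := by
  unfold twoStep
  split_ifs <;> lia

lemma antitoneOn_Ici_zero : AntitoneOn (twoStep q r h) (Set.Ici 0) := by
  intro i (hi : 0 ≤ i) j _ hij
  unfold twoStep
  split_ifs <;> lia

lemma support_eq (hq : 0 < q) (hrh : r ≤ h) :
    (twoStep q r h).support = Finset.Ico (0 : ℤ) h := by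
  ext i
  rw [Function.mem_support, Finset.coe_Ico, Set.mem_Ico, twoStep]
  split_ifs <;> lia

lemma eq_indicator_add_indicator (hrh : r ≤ h) (i : ℤ) :
    twoStep q r h i = (Set.Ico 0 (h : ℤ)).indicator (fun _ ↦ q) i +
      (Set.Ico 0 (r : ℤ)).indicator (fun _ ↦ 1) i := by
  simp only [twoStep, Set.indicator_apply, Set.mem_Ico]
  split_ifs <;> lia

lemma finsum_eq (hrh : r ≤ h) : ∑ᶠ i, twoStep q r h i = q * h + r := by
  simp only [eq_indicator_add_indicator hrh, ← Finset.coe_Ico]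
  rw [finsum_add_distrib (finite_support_indicator _ _) (finite_support_indicator _ _),
    finsum_indicator_const, finsum_indicator_const]
  simp [mul_comm]

lemma apply_zero_eq_ceil (hrh : r < h) :
    (twoStep q r h 0 : ℤ) = ⌈((q * h + r : ℕ) : ℚ) / h⌉ := by
  have hpos : (0 : ℚ) < h := by exact_mod_cast r.zero_le.trans_lt hrh
  have hsplit : ((q * h + r : ℕ) : ℚ) / h = q + (r : ℚ) / h := by
    push_cast
    field_simp
  rw [hsplit, Int.ceil_natCast_add]
  obtain rfl | hr := r.eq_zero_or_pos
  · simp [twoStep, hrh]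
  · have hceil : ⌈(r : ℚ) / h⌉ = 1 := by
      rw [Int.ceil_eq_iff, div_le_iff₀ hpos]
      exact ⟨by rw [Int.cast_one, sub_self]; positivity, by simpa using hrh.le⟩
    simp [twoStep, hr, hceil]

end twoStep

theorem sliding_max_sum_achievability
    (a : ℤ) (ha : 1 ≤ a) (h A : ℕ) (h1 : 1 ≤ h) (hAh : h ≤ A)
    (q r : ℕ) (hq : q = A / h) (hr : r = A % h)
    (v : ℤ → ℕ)
    (hv : v = fun i : ℤ => if 0 ≤ i ∧ i < (r : ℤ) then q + 1
      else if (r : ℤ) ≤ i ∧ i < (h : ℤ) then q else 0) :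
    (Function.support v).ncard = h ∧
      (∑ᶠ i : ℤ, v i) = A ∧
      ((∑ᶠ i : ℤ, (Finset.Icc (i - a + 1) i).sup v : ℕ) : ℤ) =
        (A : ℤ) + (a - 1) * ⌈(A : ℚ) / (h : ℚ)⌉ := by
  obtain rfl : v = twoStep q r h := hv
  have hqpos : 0 < q := hq ▸ Nat.div_pos hAh h1
  have hrh : r < h := hr ▸ Nat.mod_lt A h1
  obtain rfl : A = q * h + r := by rw [hq, hr, Nat.div_add_mod']
  have hsupp := twoStep.support_eq hqpos hrh.le
  have hsum := twoStep.finsum_eq (q := q) hrh.le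
  refine ⟨?_, hsum, ?_⟩
  · rw [hsupp, Set.ncard_coe_finset, Int.card_Ico, sub_zero, Int.toNat_natCast]
  · have hmax := finsum_slidingMax_of_antitoneOn (hsupp ▸ Finset.finite_toSet _)
      (fun _ ↦ twoStep.apply_of_neg) twoStep.antitoneOn_Ici_zero ha
    change ((∑ᶠ i, slidingMax a (twoStep q r h) i : ℕ) : ℤ) = _
    rw [hmax, hsum, ← twoStep.apply_zero_eq_ceil hrh, add_comm, smul_eq_mul, Nat.cast_add,
      Nat.cast_mul, Int.toNat_of_nonneg (sub_nonneg.2 ha)]
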